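/- For f continuous on [0,1], (Iᵅ f)(x) → f(x) for each x ∈ (0,1] as α → 0⁺ (pointwise convergence of the Riemann–Liouville fractional integral to the identity). -/

import Mathlib

open MeasureTheory Set Filter

/-- Riemann–Liouville fractional integral of order `α` with base point `0`
    (with the convention `I⁰ = Id`). -/
noncomputable def RL (α : ℝ) (f : ℝ → ℝ) (x : ℝ) : ℝ :=
  if α = 0 then f x else (Real.Gamma α)⁻¹ * ∫ t in (0:ℝ)..x, (x - t) ^ (α - 1) * f t

/-!
The kernels `s ↦ s ^ (α - 1) / Γ(α)` form an approximate identity as `α → 0⁺`. Their mass on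
`(0, x)` is `x ^ α / Γ(α + 1)`, which tends to `1`. Away from the singularity, for `s ≥ δ > 0`, they
are bounded by `δ ^ (α - 1) / Γ(α)`, which tends to `0` because `1 / Γ` vanishes at `0`. Hence only
the limit of `f` at `x` from the left survives, as soon as `f` is integrable on `(0, x)`.
-/

open scoped Topology

lemma continuousAt_Gamma_add_one_zero : ContinuousAt (fun α : ℝ => Real.Gamma (α + 1)) 0 := by
  have hΓ : DifferentiableAt ℝ Real.Gamma (0 + 1) := by
    simpa using Real.hasDerivAt_Gamma_one.differentiableAt
  exact ContinuousAt.comp (f := fun α : ℝ => α + 1) hΓ.continuousAt (by fun_prop)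

-- At `0` the junk values `Γ(0) = 0` and `0⁻¹ = 0` agree with the entire function `1 / Γ`.
lemma tendsto_inv_Gamma_zero : Tendsto (fun α : ℝ => (Real.Gamma α)⁻¹) (𝓝 0) (𝓝 0) := by
  have hrec (α : ℝ) : α / Real.Gamma (α + 1) = (Real.Gamma α)⁻¹ := by
    rcases eq_or_ne α 0 with rfl | hα
    · simp
    · rw [Real.Gamma_add_one hα, div_mul_cancel_left₀ hα]
  have hcont : ContinuousAt (fun α : ℝ => α / Real.Gamma (α + 1)) 0 :=
    continuousAt_id.div continuousAt_Gamma_add_one_zero (by simp)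
  simpa only [hrec, Real.Gamma_zero, inv_zero] using hcont.tendsto

lemma tendsto_rpow_div_Gamma_add_one_zero {x : ℝ} (hx : x ≠ 0) :
    Tendsto (fun α : ℝ => x ^ α / Real.Gamma (α + 1)) (𝓝 0) (𝓝 1) := by
  have hcont : ContinuousAt (fun α : ℝ => x ^ α / Real.Gamma (α + 1)) 0 :=
    (Real.continuousAt_const_rpow hx).div continuousAt_Gamma_add_one_zero (by simp)
  simpa using hcont.tendsto

/-- The convolution kernel `s ^ (α - 1) / Γ(α)` of the Riemann–Liouville fractional integral of
order `α`, meant for `0 < α` and `0 < s`. -/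
noncomputable def rlKernel (α s : ℝ) : ℝ :=
  (Real.Gamma α)⁻¹ * s ^ (α - 1)

namespace rlKernel

lemma nonneg {α s : ℝ} (hα : 0 ≤ α) (hs : 0 ≤ s) : 0 ≤ rlKernel α s :=
  mul_nonneg (inv_nonneg.2 (Real.Gamma_nonneg_of_nonneg hα)) (Real.rpow_nonneg hs _)

lemma measurable (α : ℝ) : Measurable (rlKernel α) := by
  unfold rlKernel
  fun_prop

lemma antitoneOn_Ioi {α : ℝ} (hα₀ : 0 ≤ α) (hα₁ : α ≤ 1) : AntitoneOn (rlKernel α) (Ioi 0) :=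
  fun _ hs _ ht hst => mul_le_mul_of_nonneg_left
    (Real.antitoneOn_rpow_Ioi_of_exponent_nonpos (sub_nonpos.2 hα₁) hs ht hst)
    (inv_nonneg.2 (Real.Gamma_nonneg_of_nonneg hα₀))

lemma tendsto_zero {s : ℝ} (hs : s ≠ 0) : Tendsto (fun α => rlKernel α s) (𝓝 0) (𝓝 0) := by
  have hpow : ContinuousAt (fun α : ℝ => s ^ (α - 1)) 0 :=
    ContinuousAt.comp (f := fun α : ℝ => α - 1) (Real.continuousAt_const_rpow hs) (by fun_prop)
  simpa only [rlKernel, zero_mul] using tendsto_inv_Gamma_zero.mul hpow.tendsto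

lemma tendstoUniformlyOn_Ici {δ : ℝ} (hδ : 0 < δ) :
    TendstoUniformlyOn rlKernel 0 (𝓝[>] 0) (Ici δ) := by
  rw [Metric.tendstoUniformlyOn_iff]
  intro ε hε
  have hsmall : ∀ᶠ α in 𝓝[>] 0, rlKernel α δ < ε :=
    ((tendsto_zero hδ.ne').mono_left nhdsWithin_le_nhds).eventually_lt_const hε
  filter_upwards [hsmall, Ioo_mem_nhdsGT (zero_lt_one' ℝ)] with α hαε hα s hs
  rw [Pi.zero_apply, dist_zero_left, Real.norm_of_nonneg (nonneg hα.1.le (hδ.le.trans hs))]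
  exact (antitoneOn_Ioi hα.1.le hα.2.le hδ (hδ.trans_le hs) hs).trans_lt hαε

lemma integral_eq {α : ℝ} (hα : 0 < α) (x : ℝ) :
    ∫ s in (0 : ℝ)..x, rlKernel α s = x ^ α / Real.Gamma (α + 1) := by
  simp only [rlKernel]
  rw [intervalIntegral.integral_const_mul, integral_rpow (Or.inl (by linarith)), sub_add_cancel,
    Real.zero_rpow hα.ne', Real.Gamma_add_one hα.ne']
  field_simp
  ring

lemma tendsto_integral {x : ℝ} (hx : x ≠ 0) :
    Tendsto (fun α => ∫ s in (0 : ℝ)..x, rlKernel α s) (𝓝[>] 0) (𝓝 1) := by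
  refine ((tendsto_rpow_div_Gamma_add_one_zero hx).mono_left nhdsWithin_le_nhds).congr' ?_
  filter_upwards [self_mem_nhdsWithin] with α hα
  exact (integral_eq hα x).symm

lemma tendstoUniformlyOn_comp_sub_left {x : ℝ} {u : Set ℝ} (hu : u ∈ 𝓝 x) :
    TendstoUniformlyOn (fun α t => rlKernel α (x - t)) 0 (𝓝[>] 0) (Iio x \ u) := by
  obtain ⟨δ, hδ, hball⟩ := Metric.mem_nhds_iff.1 hu
  refine ((tendstoUniformlyOn_Ici hδ).comp (x - ·)).mono fun t ⟨ht, htu⟩ => ?_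
  have hdist : δ ≤ dist x t := by
    simpa [dist_comm] using fun h => htu (hball h)
  rwa [Real.dist_eq, abs_of_pos (sub_pos.2 ht)] at hdist

theorem tendsto_intervalIntegral_smul {E : Type*} [NormedAddCommGroup E] [NormedSpace ℝ E]
    [CompleteSpace E] {f : ℝ → E} {a x : ℝ} {y : E} (hax : a < x)
    (hf : IntervalIntegrable f volume a x) (hfx : Tendsto f (𝓝[<] x) (𝓝 y)) :
    Tendsto (fun α => ∫ t in a..x, rlKernel α (x - t) • f t) (𝓝[>] 0) (𝓝 y) := by
  have hmass : Tendsto (fun α => ∫ t in Ioo a x, rlKernel α (x - t)) (𝓝[>] 0) (𝓝 1) := by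
    simp only [← integral_Ioc_eq_integral_Ioo, ← intervalIntegral.integral_of_le hax.le,
      intervalIntegral.integral_comp_sub_left, sub_self]
    exact tendsto_integral (sub_pos.2 hax).ne'
  simp only [intervalIntegral.integral_of_le hax.le, integral_Ioc_eq_integral_Ioo]
  refine tendsto_setIntegral_peak_smul_of_integrableOn_of_tendsto (x₀ := x)
    measurableSet_Ioo measurableSet_Ioo subset_rfl self_mem_nhdsWithin measure_Ioo_lt_top.ne ?_
    ?_ hmass ?_ ((intervalIntegrable_iff_integrableOn_Ioo_of_le hax.le).1 hf) ?_
  · filter_upwards [self_mem_nhdsWithin] with α hα t ht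
    exact nonneg (le_of_lt hα) (sub_nonneg.2 ht.2.le)
  · intro u hu hxu
    exact (tendstoUniformlyOn_comp_sub_left (hu.mem_nhds hxu)).mono
      (sdiff_subset_sdiff_left Ioo_subset_Iio_self)
  · exact .of_forall fun α =>
      ((measurable α).comp (measurable_id.const_sub x)).aestronglyMeasurable
  · rwa [nhdsWithin_Ioo_eq_nhdsLT hax]

end rlKernel

lemma RL_eq_integral_rlKernel {α : ℝ} (hα : α ≠ 0) (f : ℝ → ℝ) (x : ℝ) :
    RL α f x = ∫ t in (0 : ℝ)..x, rlKernel α (x - t) • f t := by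
  simp only [RL, if_neg hα, rlKernel, smul_eq_mul, mul_assoc, intervalIntegral.integral_const_mul]

theorem rl_tendsto_zero_pointwise_general {f : ℝ → ℝ} {x y : ℝ} (hx : 0 < x)
    (hf : IntervalIntegrable f volume 0 x) (hfx : Tendsto f (𝓝[<] x) (𝓝 y)) :
    Tendsto (fun α => RL α f x) (𝓝[>] 0) (𝓝 y) := by
  refine (rlKernel.tendsto_intervalIntegral_smul hx hf hfx).congr' ?_
  filter_upwards [self_mem_nhdsWithin] with α hα
  exact (RL_eq_integral_rlKernel (ne_of_gt hα) f x).symm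

/-- For continuous `f` on `[0,1]`, `(Iᵅ f)(x) → f(x)` for each `x ∈ (0,1]` as `α → 0⁺`. -/
theorem rl_tendsto_zero_pointwise (f : ℝ → ℝ) (hf : ContinuousOn f (Icc (0:ℝ) 1)) :
    ∀ x ∈ Ioc (0:ℝ) 1,
      Tendsto (fun α : ℝ => RL α f x) (nhdsWithin 0 (Ioi (0:ℝ))) (nhds (f x)) := by
  intro x hx
  have hfx : ContinuousOn f (Icc 0 x) := hf.mono (Icc_subset_Icc_right hx.2)
  exact rl_tendsto_zero_pointwise_general hx.1 (hfx.intervalIntegrable_of_Icc hx.1.le)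
    (continuousWithinAt_Ioo_iff_Iio hx.1 |>.1 <|
      (hfx x (right_mem_Icc.2 hx.1.le)).mono Ioo_subset_Icc_self)
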